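/- Let Φ be of type B_n, C_n, or D_n, let I ⊆ Δ be standard, and let λ be an integral Φ_I-regular weight with Φ_{λ̄} = Φ_J. Let 1 ≤ i, j ≤ q_{m−1} with a := |λ_i|, b := |λ_j| and ab ≠ 0, and let 1 ≤ s, t < m be such that q_{s−1} < i ≤ q_s and q_{t−1} < j ≤ q_t. If (1) n_s^λ(a) = n_t^λ(b) = 1, (2) n_s^λ(b) ≤ 1 or n_t^λ(a) ≥ 1, and (3) n_s^λ(b) ≥ 1 or n_t^λ(a) ≤ 1, then λ ⟷ s_{e_i}s_{e_j}λ. -/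

import Mathlib

namespace JantzenBlocks

open scoped Classical

/-- The three classical types `B`, `C`, `D`. -/
inductive CType : Type
  | B | C | D
deriving DecidableEq

/-- The weight space `ℝ^n`. -/
abbrev V (n : ℕ) := Fin n → ℝ

noncomputable section

/-- The standard inner product on `ℝ^n`. -/
def inn {n : ℕ} (x y : V n) : ℝ := ∑ i, x i * y i

/-- The standard basis vector `e i`. -/
def ee {n : ℕ} (i : Fin n) : V n := Pi.single i 1

/-- The reflection `s_v` in the vector `v`. -/
def sRefl {n : ℕ} (v x : V n) : V n := x - (2 * inn x v / inn v v) • v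

/-- The roots `±e_i ± e_j` (`i ≠ j`), i.e. the root system of type `D_n`. -/
def DRoots (n : ℕ) : Set (V n) :=
  {v | ∃ i j : Fin n, i ≠ j ∧ (v = ee i + ee j ∨ v = ee i - ee j ∨ v = -ee i - ee j)}

/-- The ambient root system `Φ` of type `B_n`, `C_n` or `D_n`. -/
def Phi (n : ℕ) : CType → Set (V n)
  | CType.B => DRoots n ∪ {v | ∃ i : Fin n, v = ee i ∨ v = -ee i}
  | CType.C => DRoots n ∪ {v | ∃ i : Fin n, v = (2:ℝ) • ee i ∨ v = -((2:ℝ) • ee i)}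
  | CType.D => DRoots n

/-- The standard positive system `Φ⁺`: roots whose first nonzero coordinate is positive. -/
def PhiPos (n : ℕ) (ct : CType) : Set (V n) :=
  {v | v ∈ Phi n ct ∧ ∃ i : Fin n, 0 < v i ∧ ∀ j : Fin n, j < i → v j = 0}

/-- The simple root `α_{i+1}` (`0`-based index `i`). -/
def alphaR (n : ℕ) (ct : CType) (i : Fin n) : V n :=
  if h : i.1 + 1 < n then ee i - ee ⟨i.1 + 1, h⟩
  else
    match ct with
    | CType.B => ee i
    | CType.C => (2:ℝ) • ee i
    | CType.D => ee ⟨n - 2, Nat.sub_lt i.pos (by norm_num)⟩ + ee i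

/-- The subsystem `Φ_I` generated by the simple roots indexed by `I`. -/
def PhiI (n : ℕ) (ct : CType) (I : Finset (Fin n)) : Set (V n) :=
  Phi n ct ∩ (Submodule.span ℝ (alphaR n ct '' (I : Set (Fin n))) : Set (V n))

/-- `λ` is `Φ_I`-regular. -/
def RegI (n : ℕ) (ct : CType) (I : Finset (Fin n)) (lam : V n) : Prop :=
  ∀ β ∈ PhiI n ct I, inn lam β ≠ 0

/-- `λ` is integral. -/
def IntegralW (n : ℕ) (ct : CType) (lam : V n) : Prop :=
  ∀ β ∈ Phi n ct, ∃ k : ℤ, 2 * inn lam β / inn β β = (k : ℝ)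

/-- `λ` is dominant. -/
def DominantW (n : ℕ) (ct : CType) (lam : V n) : Prop :=
  ∀ i : Fin n, 0 ≤ inn lam (alphaR n ct i)

/-- `μ` lies in the `W_I`-orbit of `λ` (`W_I` generated by the reflections `s_α`, `α ∈ I`). -/
def WIOrb (n : ℕ) (ct : CType) (I : Finset (Fin n)) : V n → V n → Prop :=
  Relation.ReflTransGen (fun x y => ∃ i ∈ I, y = sRefl (alphaR n ct i) x)

/-- `μ` lies in the `W`-orbit of `λ`. -/
def WOrb (n : ℕ) (ct : CType) : V n → V n → Prop := WIOrb n ct Finset.univ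

/-- `λ ∈ Λ_I⁺`. -/
def LamIPlus (n : ℕ) (ct : CType) (I : Finset (Fin n)) (lam : V n) : Prop :=
  IntegralW n ct lam ∧ ∀ i ∈ I, 0 < inn lam (alphaR n ct i)

/-- The sorted list `q_1 < q_2 < … < q_{m-1}` (`1`-based values) of indices of `Δ∖I`. -/
def Qlist (n : ℕ) (I : Finset (Fin n)) : List ℕ :=
  ((Finset.univ \ I).sort (· ≤ ·)).map (fun j => j.1 + 1)

/-- The number `m` of segments determined by `I`. -/
def mval (n : ℕ) (I : Finset (Fin n)) : ℕ := (Qlist n I).length + 1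

/-- `q_s`, with the conventions `q_0 = 0` and `q_m = n`. -/
def qval (n : ℕ) (I : Finset (Fin n)) (s : ℕ) : ℕ :=
  if s = 0 then 0 else if s < mval n I then (Qlist n I).getD (s - 1) 0 else n

/-- `I` is standard (automatic in types `B`, `C`). -/
def StandardI (n : ℕ) (ct : CType) (I : Finset (Fin n)) : Prop :=
  ct = CType.D → ∀ h : 2 ≤ n,
    ((⟨n - 2, by omega⟩ : Fin n) ∈ I ∨ (⟨n - 1, by omega⟩ : Fin n) ∉ I)

/-- `q_s`, corrected for nonstandard `I` (where `q_{m-1}` is replaced by `n`,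
so that the `(m-1)`-st segment is `(q_{m-2}, n]` and the `m`-th segment is empty). -/
def qv (n : ℕ) (ct : CType) (I : Finset (Fin n)) (s : ℕ) : ℕ :=
  if ¬ StandardI n ct I ∧ s = mval n I - 1 then n else qval n I s

/-- The segment length `n_s`. -/
def nsval (n : ℕ) (ct : CType) (I : Finset (Fin n)) (s : ℕ) : ℕ :=
  qv n ct I s - qv n ct I (s - 1)

/-- The (`0`-based) index `i` lies in the `s`-th segment, i.e. `q_{s-1} < i+1 ≤ q_s`. -/
def InSeg (n : ℕ) (ct : CType) (I : Finset (Fin n)) (s : ℕ) (i : Fin n) : Prop :=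
  qv n ct I (s - 1) < i.1 + 1 ∧ i.1 + 1 ≤ qv n ct I s

/-- `n_s^λ(a)`: the number of entries of the `s`-th segment of `λ` with absolute value `a`. -/
def nsl (n : ℕ) (ct : CType) (I : Finset (Fin n)) (lam : V n) (s : ℕ) (a : ℝ) : ℕ :=
  (Finset.univ.filter (fun i : Fin n => InSeg n ct I s i ∧ |lam i| = a)).card

/-- `a_t = λ̄_{q̄_t}` for `1 ≤ t < m̄`, and `a_{m̄} = 0`. -/
def aval (n : ℕ) (ct : CType) (J : Finset (Fin n)) (lbar : V n) (t : ℕ) : ℝ :=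
  if t < mval n J then
    (if h : qv n ct J t - 1 < n then lbar ⟨qv n ct J t - 1, h⟩ else 0)
  else 0

/-- `n_s^λ(a)` is maximal among all `Φ_I`-regular weights in the orbit of `λ`. -/
def IsMaxN (n : ℕ) (ct : CType) (I : Finset (Fin n)) (lam : V n) (s : ℕ) (a : ℝ) : Prop :=
  ∀ mu : V n, WOrb n ct lam mu → RegI n ct I mu →
    nsl n ct I mu s a ≤ nsl n ct I lam s a

/-- The exceptional configurations of Proposition 4.7 (types `B` and `C`, with
`shortR i` the short/long root `e_i` resp. `2e_i`). -/
def ExcBC (n : ℕ) (ct : CType) (I : Finset (Fin n)) (shortR : Fin n → V n)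
    (lam β : V n) : Prop :=
  ∃ s : ℕ, 1 ≤ s ∧ s < mval n I ∧ ∃ a : ℝ, 0 < a ∧
    nsl n ct I lam s a = 1 ∧
    nsl n ct I lam s 0 + nsl n ct I lam (mval n I) a = 1 ∧
    ((∃ i j : Fin n, InSeg n ct I s i ∧ InSeg n ct I s j ∧
        |lam i| = a ∧ lam j = 0 ∧ (β = shortR i ∨ β = ee i + ee j)) ∨
     (∃ i j : Fin n, InSeg n ct I s i ∧ InSeg n ct I (mval n I) j ∧
        ((lam i = a ∧ lam j = a) ∨ (lam i = -a ∧ lam j = -a)) ∧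
        (β = shortR i ∨ β = ee i + ee j)) ∨
     (∃ i j : Fin n, InSeg n ct I s i ∧ InSeg n ct I (mval n I) j ∧
        ((lam i = a ∧ lam j = -a) ∨ (lam i = -a ∧ lam j = a)) ∧
        (β = shortR i ∨ β = ee i - ee j)))

/-- The exceptional configurations of Proposition 4.7 (type `D`). -/
def ExcD (n : ℕ) (I : Finset (Fin n)) (lam β : V n) : Prop :=
  ∃ s : ℕ, 1 ≤ s ∧ s < mval n I ∧ ∃ a : ℝ, 0 < a ∧
    nsl n CType.D I lam s a = 1 ∧ nsl n CType.D I lam (mval n I) a = 1 ∧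
    nsl n CType.D I lam s 0 = 1 ∧ nsl n CType.D I lam (mval n I) 0 = 1 ∧
    ∃ i j k l : Fin n, InSeg n CType.D I s i ∧ InSeg n CType.D I s j ∧
      InSeg n CType.D I (mval n I) k ∧ InSeg n CType.D I (mval n I) l ∧
      lam j = 0 ∧ lam l = 0 ∧
      ((((lam i = a ∧ lam k = a) ∨ (lam i = -a ∧ lam k = -a)) ∧
          (β = ee i + ee j ∨ β = ee i + ee k)) ∨
       (((lam i = a ∧ lam k = -a) ∨ (lam i = -a ∧ lam k = a)) ∧
          (β = ee i + ee j ∨ β = ee i - ee k)))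

/-- The exceptional configurations in which `β` fails to be a linked root. -/
def Exc (n : ℕ) (ct : CType) (I : Finset (Fin n)) (lam β : V n) : Prop :=
  match ct with
  | CType.B => ExcBC n CType.B I (fun i => ee i) lam β
  | CType.C => ExcBC n CType.C I (fun i => (2:ℝ) • ee i) lam β
  | CType.D => ExcD n I lam β

/-- `β` is a linked root of the `Φ_I`-regular weight `λ` (for standard `I`). -/
def PlainLinked (n : ℕ) (ct : CType) (I : Finset (Fin n)) (lam β : V n) : Prop :=
  RegI n ct I lam ∧ β ∈ PhiPos n ct ∧ β ∉ PhiI n ct I ∧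
  RegI n ct I (sRefl β lam) ∧ sRefl β lam ≠ lam ∧ ¬ Exc n ct I lam β

/-- The transposition of the last two indices. -/
def swapLast (n : ℕ) (j : Fin n) : Fin n :=
  if j.1 = n - 1 then ⟨n - 2, Nat.sub_lt j.pos (by norm_num)⟩
  else if j.1 = n - 2 then ⟨n - 1, Nat.sub_lt j.pos (by norm_num)⟩
  else j

/-- The isomorphism `φ = s_{e_n}` (negating the last coordinate). -/
def phiW {n : ℕ} (x : V n) : V n := fun j => if j.1 = n - 1 then -x j else x j

/-- The image `φ(I)` of an index set under `φ` (interchanging `α_{n-1}` and `α_n`). -/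
def phiIdx (n : ℕ) (I : Finset (Fin n)) : Finset (Fin n) := I.image (swapLast n)

/-- `β` is a linked root of `λ`; for nonstandard `I` the notion is transported along `φ`. -/
def LinkedRoot (n : ℕ) (ct : CType) (I : Finset (Fin n)) (lam β : V n) : Prop :=
  if StandardI n ct I then PlainLinked n ct I lam β
  else PlainLinked n ct (phiIdx n I) (phiW lam) (phiW β)

/-- One step in a connecting chain: `y ∈ W_I x`, or `y = w s_β x` for a linked root `β` of `x`. -/
def ConnStep (n : ℕ) (ct : CType) (I : Finset (Fin n)) (x y : V n) : Prop :=
  RegI n ct I x ∧ RegI n ct I y ∧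
  (WIOrb n ct I x y ∨ ∃ β : V n, LinkedRoot n ct I x β ∧ WIOrb n ct I (sRefl β x) y)

/-- `λ ⟷ μ`: `λ` and `μ` are connected by a chain of linked roots. -/
def Conn (n : ℕ) (ct : CType) (I : Finset (Fin n)) (lam mu : V n) : Prop :=
  RegI n ct I lam ∧ RegI n ct I mu ∧
  Relation.ReflTransGen (ConnStep n ct I) lam mu

/-- The set `^IW^Jλ̄ = Wλ̄ ∩ Λ_I⁺` of weights parametrizing the simple modules. -/
def IWJset (n : ℕ) (ct : CType) (I : Finset (Fin n)) (lbar : V n) : Set (V n) :=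
  {mu | WOrb n ct lbar mu ∧ LamIPlus n ct I mu}

/-- `(S, S̄)` is a separable pair for the weight `λ`. -/
def IsSepPair (n : ℕ) (ct : CType) (I J : Finset (Fin n)) (lbar lam : V n)
    (S Sb : Finset ℕ) : Prop :=
  S.Nonempty ∧ Sb.Nonempty ∧
  S ⊆ Finset.Icc 1 (mval n I) ∧ Sb ⊆ Finset.Icc 1 (mval n J) ∧
  1 < mval n I ∧ 1 < mval n J ∧
  (∀ s ∈ S, ∀ t ∈ Sb, IsMaxN n ct I lam s (aval n ct J lbar t)) ∧
  (∀ s ∈ Finset.Icc 1 (mval n I), s ∉ S →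
     ∀ t ∈ Finset.Icc 1 (mval n J), t ∉ Sb →
       nsl n ct I lam s (aval n ct J lbar t) = 0) ∧
  (match ct with
   | CType.B => (mval n I ∈ S ↔ mval n J ∉ Sb)
   | CType.C => (mval n I ∈ S ↔ mval n J ∉ Sb)
   | CType.D => (mval n I ∈ S ↔ mval n J ∈ Sb))

/-- `𝒟`: the set of separable pairs of the system `(Φ, Φ_I, Φ_J)`. -/
def DSet (n : ℕ) (ct : CType) (I J : Finset (Fin n)) (lbar : V n) :
    Set (Finset ℕ × Finset ℕ) :=
  {p | ∀ lam ∈ IWJset n ct I lbar, IsSepPair n ct I J lbar lam p.1 p.2}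

/-- The four weakly separable pairs. -/
def IsWeakPair (n : ℕ) (I J : Finset (Fin n)) (p : Finset ℕ × Finset ℕ) : Prop :=
  p = (Finset.Icc 1 (mval n I - 1), {mval n J}) ∨
  p = (Finset.Icc 1 (mval n I), {mval n J}) ∨
  p = ({mval n I}, Finset.Icc 1 (mval n J - 1)) ∨
  p = ({mval n I}, Finset.Icc 1 (mval n J))

/-- The system `(Φ, Φ_I, Φ_J)` is separable. -/
def SepSys (n : ℕ) (ct : CType) (I J : Finset (Fin n)) (lbar : V n) : Prop :=
  (DSet n ct I J lbar).Nonempty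

/-- The system `(Φ, Φ_I, Φ_J)` is strongly separable. -/
def StronglySepSys (n : ℕ) (ct : CType) (I J : Finset (Fin n)) (lbar : V n) : Prop :=
  ∃ p ∈ DSet n ct I J lbar, ¬ IsWeakPair n I J p

/-- The system `(Φ, Φ_I, Φ_J)` is weakly separable. -/
def WeaklySepSys (n : ℕ) (ct : CType) (I J : Finset (Fin n)) (lbar : V n) : Prop :=
  SepSys n ct I J lbar ∧ ∀ p ∈ DSet n ct I J lbar, IsWeakPair n I J p

/-- The partial ordering on separable pairs: `(S₁,S̄₁) ≤ (S₂,S̄₂)` iff `S₁ ⊆ S₂`, `S̄₁ ⊇ S̄₂`. -/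
def pairLE (p q : Finset ℕ × Finset ℕ) : Prop := p.1 ⊆ q.1 ∧ q.2 ⊆ p.2

/-- Strict version of `pairLE`. -/
def pairLT (p q : Finset ℕ × Finset ℕ) : Prop := pairLE p q ∧ p ≠ q

/-- The generating relations of the equivalence `∼` on `𝒟`. -/
def PairRel (D : Set (Finset ℕ × Finset ℕ)) (p q : Finset ℕ × Finset ℕ) : Prop :=
  p ∈ D ∧ q ∈ D ∧ ((p.2 = q.2 ∧ p.1 ⊆ q.1) ∨ (p.1 = q.1 ∧ p.2 ⊆ q.2))

/-- The equivalence relation `∼` on separable pairs. -/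
def PairEquiv (D : Set (Finset ℕ × Finset ℕ)) :
    Finset ℕ × Finset ℕ → Finset ℕ × Finset ℕ → Prop :=
  Relation.EqvGen (PairRel D)

/-- A trivial separable pair. -/
def TrivialPair (n : ℕ) (ct : CType) (I J : Finset (Fin n)) (lbar : V n)
    (p : Finset ℕ × Finset ℕ) : Prop :=
  match ct with
  | CType.B | CType.C =>
    (∃ s0 : ℕ, 1 ≤ s0 ∧ s0 < mval n I ∧
       PairEquiv (DSet n ct I J lbar) p ({s0}, Finset.Icc 1 (mval n J))) ∨
    (∃ t0 : ℕ, 1 ≤ t0 ∧ t0 < mval n J ∧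
       PairEquiv (DSet n ct I J lbar) p (Finset.Icc 1 (mval n I), {t0}))
  | CType.D =>
    (∃ s0 : ℕ, 1 ≤ s0 ∧ s0 < mval n I ∧
       PairEquiv (DSet n ct I J lbar) p ({s0}, Finset.Icc 1 (mval n J - 1))) ∨
    (∃ t0 : ℕ, 1 ≤ t0 ∧ t0 < mval n J ∧
       PairEquiv (DSet n ct I J lbar) p (Finset.Icc 1 (mval n I - 1), {t0}))

/-- The set of blocks: equivalence classes of `^IW^Jλ̄` under `⟷`. -/
def BlockSet (n : ℕ) (ct : CType) (I : Finset (Fin n)) (lbar : V n) : Set (Set (V n)) :=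
  {Cl | ∃ lam ∈ IWJset n ct I lbar,
     Cl = {mu | mu ∈ IWJset n ct I lbar ∧ Conn n ct I lam mu}}

/-- The parity `P(λ)` of the number of negative entries of `λ`. -/
def Pfun (n : ℕ) (lam : V n) : ℕ :=
  (Finset.univ.filter (fun i : Fin n => lam i < 0)).card % 2

/-- A fundamental chain `c 1 ∼ c 2 ∼ … ∼ c k` in `𝒟`. -/
def IsFundChain (D : Set (Finset ℕ × Finset ℕ)) (c : ℕ → Finset ℕ × Finset ℕ)
    (k : ℕ) : Prop :=
  1 ≤ k ∧ (∀ i, 1 ≤ i → i ≤ k → c i ∈ D) ∧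
  (∀ i, 1 ≤ i → i < k →
     ((c i).1 = (c (i+1)).1 ∨ (c i).2 = (c (i+1)).2) ∧
     (pairLT (c i) (c (i+1)) ∨ pairLT (c (i+1)) (c i)))

/-- The list of parts of the partition `π_I`. -/
def piParts (n : ℕ) (ct : CType) (I : Finset (Fin n)) : List ℕ :=
  (List.range (mval n I - 1)).map (fun s => nsval n ct I (s+1)) ++
  (List.range (mval n I - 1)).map (fun s => nsval n ct I (s+1)) ++
  (match ct with
   | CType.B => [2 * nsval n ct I (mval n I) + 1]
   | CType.C => [2 * nsval n ct I (mval n I)]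
   | CType.D => if nsval n ct I (mval n I) = 0 then []
                else [2 * nsval n ct I (mval n I) - 1, 1])

/-- The `i`-th part (`1`-based) of the partition with list of parts `L`. -/
def partAt (L : List ℕ) (i : ℕ) : ℕ :=
  (L.mergeSort (fun a b => decide (b ≤ a))).getD (i - 1) 0

/-- The `i`-th part (`1`-based) of the dual partition `π^t`: the number of parts `≥ i`. -/
def dualAt (L : List ℕ) (i : ℕ) : ℕ :=
  (L.filter (fun x => decide (i ≤ x))).length

/-- `k` is compatible with the system `(Φ, Φ_I, Φ_J)`. -/
def CompatibleK (n : ℕ) (ct : CType) (I J : Finset (Fin n)) (k : ℕ) : Prop :=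
  1 ≤ k ∧ k ≤ 2 * mval n I - 1 ∧
  (match ct with
   | CType.B =>
     (Odd k ∧ k ≤ partAt (piParts n CType.B J) 2 ∧
        2 * nsval n CType.B J (mval n J) + 1 ≤ k ∧
        partAt (piParts n CType.B I) k ≤ 2 * nsval n CType.B I (mval n I) + 1) ∨
     (Even k ∧ k ≤ 2 * nsval n CType.B J (mval n J) ∧
        2 * nsval n CType.B I (mval n I) + 1 ≤ partAt (piParts n CType.B I) k)
   | CType.C =>
     (Odd k ∧ k ≤ partAt (piParts n CType.C J) 2 ∧
        2 * nsval n CType.C J (mval n J) + 1 ≤ k ∧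
        partAt (piParts n CType.C I) k ≤ 2 * nsval n CType.C I (mval n I)) ∨
     (Even k ∧ k ≤ 2 * nsval n CType.C J (mval n J) ∧
        2 * nsval n CType.C I (mval n I) + 1 ≤ partAt (piParts n CType.C I) k)
   | CType.D =>
     (Even k ∧ k ≤ partAt (piParts n CType.D J) 2 ∧
        2 * nsval n CType.D J (mval n J) ≤ k ∧
        2 * nsval n CType.D I (mval n I) ≤ partAt (piParts n CType.D I) k) ∨
     (Odd k ∧ k ≤ 2 * nsval n CType.D J (mval n J) - 1 ∧
        partAt (piParts n CType.D I) k ≤ 2 * nsval n CType.D I (mval n I) - 1))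

/-- `s_{e_{k_1}}^{ε_1} ⋯ s_{e_{k_r}}^{ε_r} μ`. -/
def applyFlips (n : ℕ) (ks : ℕ → Fin n) (eps : ℕ → Bool) : ℕ → V n → V n
  | 0, v => v
  | (r+1), v =>
      if eps (r+1) then sRefl (ee (ks (r+1))) (applyFlips n ks eps r v)
      else applyFlips n ks eps r v

end

/-!
For standard `I` every root of `Φ_I` is either `e_p - e_q` with `p, q` in one segment or supported
in the last segment, so regularity outside the last segment just says that the entries of each
segment are pairwise distinct. Every root in an exceptional case is a multiple of some `e_i`, or
involves an index of the last segment or a zero entry of the weight. Hence reflecting in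
`e_p ± e_q`, with `p, q` outside the last segment and the entries there nonzero, always links two
regular weights.

Such reflections swap two entries, with or without negating both of them, and swaps within a
segment come from `W_I`. Thus the signs at `i` and `j` can be changed together when these indices
lie in one segment, or when `|λ_i| = |λ_j|`. If the value `a` occurs exactly once in segment `t`,
at `k`, then change signs at `i, k` and afterwards at `k, j`; likewise for `b` in segment `s`.
Otherwise (2) and (3) leave two cases. If `a` is absent from segment `t` and `b` from segment `s`,
swap `λ_i` and `λ_j` and swap them back with both signs changed. If both occur at least twice,
regularity yields entries `-λ_j` in segment `s` and `-λ_i` in segment `t`; exchanging these two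
makes room for the reflection in `e_i + e_j`, after which `W_I` rearranges each segment.
-/

section Segments

variable {n : ℕ} {I : Finset (Fin n)} {p q : Fin n}

theorem getElem_sort_lt_iff {α : Type*} [LinearOrder α] (s : Finset α) {k : ℕ}
    (hk : k < s.sort.length) (a : α) : s.sort[k] < a ↔ k < (s.filter (· < a)).card := by
  have hk' : k < s.card := by simpa using hk
  let e := s.orderEmbOfFin rfl
  let k' : Fin s.card := ⟨k, hk'⟩
  have hek : s.sort[k] = e k' := (s.orderEmbOfFin_apply rfl k').symm
  have hcard : (s.filter (· < a)).card = (Finset.univ.filter (e · < a)).card := by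
    conv_lhs => rw [← s.map_orderEmbOfFin_univ rfl, Finset.filter_map, Finset.card_map]
    rfl
  rw [hek, hcard]
  by_cases h : e k' < a
  · have hsub : Finset.Iic k' ⊆ Finset.univ.filter (e · < a) := fun i hi => by
      simpa using (e.monotone (Finset.mem_Iic.1 hi)).trans_lt h
    have := Finset.card_le_card hsub
    rw [Fin.card_Iic] at this
    exact iff_of_true h this
  · have hsub : Finset.univ.filter (e · < a) ⊆ Finset.Iio k' := fun i hi => by
      rw [Finset.mem_Iio, ← e.lt_iff_lt]
      exact (Finset.mem_filter.1 hi).2.trans_le (not_lt.1 h)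
    have := Finset.card_le_card hsub
    rw [Fin.card_Iio] at this
    exact iff_of_false h this.not_gt

/-- The number of simple roots outside `I` with index less than `p`: for standard `I` the entry at
`p` lies in the segment numbered `segIdx I p + 1` (see `inSeg_iff`). -/
def segIdx (I : Finset (Fin n)) (p : Fin n) : ℕ := (Iᶜ.filter (· < p)).card

/-- The entry at `p` does not lie in the last segment, i.e. `p ≤ q_{m-1}`. -/
def BeforeLast (I : Finset (Fin n)) (p : Fin n) : Prop := ∃ k ∉ I, p ≤ k

theorem mval_eq (I : Finset (Fin n)) : mval n I = Iᶜ.card + 1 := by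
  simp [mval, Qlist, Finset.compl_eq_univ_sdiff]

theorem qval_le_iff (I : Finset (Fin n)) (s : ℕ) (p : Fin n) :
    qval n I s ≤ p ↔ s ≤ segIdx I p := by
  rcases s with _ | s
  · simp [qval]
  by_cases hs : s < Iᶜ.card
  · have hlen : s < Iᶜ.sort.length := by simpa using hs
    have hq : qval n I (s + 1) = (Iᶜ.sort[s]).1 + 1 := by
      simp [qval, mval_eq, hs, Qlist, ← Finset.compl_eq_univ_sdiff, List.getD]
    rw [hq, Nat.succ_le_iff, Nat.succ_le_iff, segIdx, ← getElem_sort_lt_iff Iᶜ hlen p, Fin.lt_def]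
  · have hq : qval n I (s + 1) = n := by simp [qval, mval_eq, hs]
    have hle : segIdx I p ≤ Iᶜ.card := Finset.card_filter_le _ _
    omega

theorem inSeg_iff {ct : CType} (hstd : StandardI n ct I) {s : ℕ} :
    InSeg n ct I s p ↔ segIdx I p + 1 = s := by
  have hq (r : ℕ) : qv n ct I r = qval n I r := by simp [qv, hstd]
  have hlower := qval_le_iff I (s - 1) p
  have hupper := qval_le_iff I s p
  rw [InSeg, hq, hq]
  omega

theorem segIdx_eq_of_inSeg {ct : CType} (hstd : StandardI n ct I) {s : ℕ}
    (hp : InSeg n ct I s p) (hq : InSeg n ct I s q) : segIdx I p = segIdx I q :=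
  Nat.succ_injective (((inSeg_iff hstd).1 hp).trans ((inSeg_iff hstd).1 hq).symm)

theorem beforeLast_iff : BeforeLast I p ↔ segIdx I p + 1 < mval n I := by
  have hlt : segIdx I p < Iᶜ.card ↔ segIdx I p ≠ Iᶜ.card :=
    (Finset.card_filter_le _ _).lt_iff_ne
  rw [mval_eq, Nat.add_lt_add_iff_right, hlt, segIdx, Ne, Finset.card_filter_eq_iff]
  simp [BeforeLast]

theorem segIdx_eq_iff : segIdx I p = segIdx I q ↔ ∀ k ∉ I, (k < p ↔ k < q) := by
  constructor
  · intro h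
    wlog hpq : p ≤ q generalizing p q
    · exact fun k hk => (this h.symm (le_of_not_ge hpq) k hk).symm
    have hsub : Iᶜ.filter (· < p) ⊆ Iᶜ.filter (· < q) :=
      Finset.monotone_filter_right _ fun _ _ hk => hk.trans_le hpq
    have heq := Finset.eq_of_subset_of_card_le hsub h.ge
    intro k hk
    simpa [hk] using Finset.ext_iff.1 heq k
  · intro h
    exact congrArg Finset.card (Finset.filter_congr fun k hk => h k (by simpa using hk))

theorem beforeLast_congr (h : segIdx I p = segIdx I q) : BeforeLast I p ↔ BeforeLast I q := by
  rw [beforeLast_iff, beforeLast_iff, h]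

theorem mem_of_segIdx_eq (h : segIdx I p = segIdx I q) {k : Fin n} (hp : p ≤ k) (hq : k < q) :
    k ∈ I := by
  by_contra hk
  exact hp.not_gt ((segIdx_eq_iff.1 h k hk).2 hq)

theorem segment_induction {P : Fin n → Prop} (h : segIdx I p = segIdx I q) (hpq : p ≤ q)
    (base : P p)
    (step : ∀ k ∈ I, p ≤ k → ∀ hk : k.1 + 1 < n, P k → P ⟨k.1 + 1, hk⟩) : P q := by
  suffices ∀ r, p.1 ≤ r → ∀ hr : r < n, r ≤ q.1 → P ⟨r, hr⟩ from this q.1 hpq q.2 le_rfl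
  intro r hpr
  induction r, hpr using Nat.le_induction with
  | base => exact fun _ _ => base
  | succ r hpr ih =>
    intro hr hrq
    have hrI : (⟨r, by omega⟩ : Fin n) ∈ I := mem_of_segIdx_eq h hpr (Fin.lt_def.2 hrq)
    exact step _ hrI hpr hr (ih _ (by omega))

end Segments

section Reflections

variable {n : ℕ} {p q : Fin n}

theorem ee_apply (i k : Fin n) : ee i k = if k = i then (1 : ℝ) else 0 :=
  Pi.single_apply i 1 k

theorem inn_eq_dotProduct (x y : V n) : inn x y = x ⬝ᵥ y := rfl

theorem inn_ee (x : V n) (i : Fin n) : inn x (ee i) = x i := by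
  simp [inn_eq_dotProduct, ee]

theorem inn_ee_sub_ee (x : V n) (p q : Fin n) : inn x (ee p - ee q) = x p - x q := by
  simp [inn_eq_dotProduct, ee]

theorem inn_ee_add_ee (x : V n) (p q : Fin n) : inn x (ee p + ee q) = x p + x q := by
  simp [inn_eq_dotProduct, ee]

/-- The weight obtained from `x` by negating the entries at `i` and `j`, i.e. `s_{e_i}s_{e_j}x` when
`i ≠ j`; for `i = j` the entry is negated once. -/
def negPair (i j : Fin n) (x : V n) : V n := fun k => if k = i ∨ k = j then -x k else x k

theorem negPair_comm (i j : Fin n) (x : V n) : negPair i j x = negPair j i x := by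
  funext k
  simp only [negPair, or_comm (a := k = i)]

theorem abs_negPair (i j : Fin n) (x : V n) (k : Fin n) : |negPair i j x k| = |x k| := by
  unfold negPair
  split_ifs <;> simp

theorem sRefl_ee (i : Fin n) (x : V n) : sRefl (ee i) x = Function.update x i (-x i) := by
  funext k
  simp only [sRefl, inn_ee, Pi.sub_apply, Pi.smul_apply, ee_apply, smul_eq_mul,
    Function.update_apply]
  split_ifs with h <;> grind

theorem sRefl_ee_sRefl_ee_self (i : Fin n) (x : V n) : sRefl (ee i) (sRefl (ee i) x) = x := by
  simp [sRefl_ee]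

theorem sRefl_ee_sRefl_ee {i j : Fin n} (hij : i ≠ j) (x : V n) :
    sRefl (ee i) (sRefl (ee j) x) = negPair i j x := by
  funext k
  simp only [sRefl_ee, negPair, Function.update_apply]
  grind

theorem sRefl_ee_sub_ee (hpq : p ≠ q) (x : V n) :
    sRefl (ee p - ee q) x = x ∘ Equiv.swap p q := by
  funext k
  simp only [sRefl, inn_ee_sub_ee, Pi.sub_apply, Pi.smul_apply, ee_apply, smul_eq_mul,
    Function.comp_apply, Equiv.swap_apply_def]
  grind

theorem sRefl_ee_add_ee (hpq : p ≠ q) (x : V n) :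
    sRefl (ee p + ee q) x = negPair p q x ∘ Equiv.swap p q := by
  funext k
  simp only [sRefl, inn_ee_add_ee, Pi.add_apply, Pi.sub_apply, Pi.smul_apply, ee_apply, smul_eq_mul,
    Function.comp_apply, negPair, Equiv.swap_apply_def]
  grind

end Reflections

section Roots

variable {n : ℕ} {ct : CType} {I : Finset (Fin n)} {p q : Fin n} {β : V n}

theorem alphaR_of_lt (ct : CType) (i : Fin n) (h : i.1 + 1 < n) :
    alphaR n ct i = ee i - ee ⟨i.1 + 1, h⟩ := dif_pos h

theorem DRoots_subset_Phi (n : ℕ) (ct : CType) : DRoots n ⊆ Phi n ct := by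
  cases ct
  exacts [Set.subset_union_left, Set.subset_union_left, subset_rfl]

theorem exists_of_mem_Phi (hβ : β ∈ Phi n ct) :
    (∃ p q, p ≠ q ∧ β = ee p - ee q) ∨ ∃ c : ℝ, c ≠ 0 ∧ ∃ p q, β = c • (ee p + ee q) := by
  have hD (h : β ∈ DRoots n) :
      (∃ p q, p ≠ q ∧ β = ee p - ee q) ∨ ∃ c : ℝ, c ≠ 0 ∧ ∃ p q, β = c • (ee p + ee q) := by
    obtain ⟨p, q, hpq, rfl | rfl | rfl⟩ := h
    · exact Or.inr ⟨1, one_ne_zero, p, q, by simp⟩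
    · exact Or.inl ⟨p, q, hpq, rfl⟩
    · exact Or.inr ⟨-1, by norm_num, p, q, by module⟩
  cases ct with
  | B =>
    rcases hβ with hβ | ⟨i, rfl | rfl⟩
    · exact hD hβ
    · exact Or.inr ⟨1 / 2, by norm_num, i, i, by module⟩
    · exact Or.inr ⟨-1 / 2, by norm_num, i, i, by module⟩
  | C =>
    rcases hβ with hβ | ⟨i, rfl | rfl⟩
    · exact hD hβ
    · exact Or.inr ⟨1, by norm_num, i, i, by module⟩
    · exact Or.inr ⟨-1, by norm_num, i, i, by module⟩
  | D => exact hD hβ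

theorem ee_sub_ee_mem_PhiI (hpq : p < q) (h : segIdx I p = segIdx I q) :
    ee p - ee q ∈ PhiI n ct I := by
  refine ⟨DRoots_subset_Phi n ct ⟨p, q, hpq.ne, Or.inr (Or.inl rfl)⟩, ?_⟩
  refine segment_induction (P := (ee p - ee · ∈ Submodule.span ℝ (alphaR n ct '' I))) h hpq.le ?_ ?_
  · simp
  · intro k hkI _ hk ih
    have hα := Submodule.subset_span (R := ℝ) (Set.mem_image_of_mem (alphaR n ct) hkI)
    rw [alphaR_of_lt ct k hk] at hα
    simpa using add_mem ih hα

theorem sum_Iic_ee (k i : Fin n) :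
    ∑ r ∈ Finset.Iic k, ee i r = if i ≤ k then (1 : ℝ) else 0 := by
  simp [ee_apply]

theorem sum_Iic_alphaR (hstd : StandardI n ct I) {k i : Fin n} (hk : k ∉ I) (hi : i ∈ I) :
    ∑ r ∈ Finset.Iic k, alphaR n ct i r = 0 := by
  have hik : i.1 ≠ k.1 := fun h => hk (Fin.ext h ▸ hi)
  by_cases hlt : i.1 + 1 < n
  · have : i ≤ k ↔ (⟨i.1 + 1, hlt⟩ : Fin n) ≤ k := by
      simp only [Fin.le_def]
      omega
    simp [alphaR_of_lt ct i hlt, Finset.sum_sub_distrib, sum_Iic_ee, this]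
  have hki : ¬ i ≤ k := by
    rw [Fin.le_def]
    omega
  cases ct with
  | B => simp [alphaR, hlt, sum_Iic_ee, hki]
  | C => simp [alphaR, hlt, ← Finset.mul_sum, sum_Iic_ee, hki]
  | D =>
    have hn : 2 ≤ n := by omega
    have hpred : (⟨n - 2, by omega⟩ : Fin n) ∈ I := by
      refine (hstd rfl hn).resolve_right (not_not.2 ?_)
      convert hi using 1
      exact Fin.ext (by simp; omega)
    have hkpred : ¬ (⟨n - 2, by omega⟩ : Fin n) ≤ k := fun hle => by
      have : k = ⟨n - 2, by omega⟩ := Fin.ext (by simp [Fin.le_def] at hle ⊢; omega)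
      exact hk (this ▸ hpred)
    simp [alphaR, hlt, Finset.sum_add_distrib, sum_Iic_ee, hki, hkpred]

theorem sum_Iic_eq_zero_of_mem_PhiI (hstd : StandardI n ct I) (hβ : β ∈ PhiI n ct I)
    {k : Fin n} (hk : k ∉ I) : ∑ r ∈ Finset.Iic k, β r = 0 := by
  obtain ⟨-, hspan⟩ := hβ
  induction hspan using Submodule.span_induction with
  | mem _ h =>
    obtain ⟨i, hi, rfl⟩ := h
    exact sum_Iic_alphaR hstd hk hi
  | zero => simp
  | add _ _ _ _ hx hy => simp [Finset.sum_add_distrib, hx, hy]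
  | smul _ _ _ hx => simp [← Finset.mul_sum, hx]

theorem eq_ee_sub_ee_or_of_mem_PhiI (hstd : StandardI n ct I) (hβ : β ∈ PhiI n ct I) :
    (∃ p q, p ≠ q ∧ segIdx I p = segIdx I q ∧ β = ee p - ee q) ∨
      ∀ k, BeforeLast I k → β k = 0 := by
  have hsum := fun k hk => sum_Iic_eq_zero_of_mem_PhiI (k := k) hstd hβ hk
  rcases exists_of_mem_Phi hβ.1 with ⟨p, q, hpq, rfl⟩ | ⟨c, hc, p, q, rfl⟩
  · refine Or.inl ⟨p, q, hpq, segIdx_eq_iff.2 fun k hk => ?_, rfl⟩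
    have := hsum k hk
    simp only [Pi.sub_apply, Finset.sum_sub_distrib, sum_Iic_ee] at this
    grind
  · refine Or.inr fun r ⟨k, hk, hrk⟩ => ?_
    have := hsum k hk
    simp only [Pi.smul_apply, Pi.add_apply, smul_eq_mul, ← Finset.mul_sum, Finset.sum_add_distrib,
      sum_Iic_ee] at this
    have hp : ¬ p ≤ k := by grind
    have hq : ¬ q ≤ k := by grind
    simp [ee_apply, (hrk.trans_lt (not_le.1 hp)).ne, (hrk.trans_lt (not_le.1 hq)).ne]

end Roots

section Regularity

variable {n : ℕ} {ct : CType} {I : Finset (Fin n)} {x y : V n}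

theorem RegI.apply_ne (hx : RegI n ct I x) {p q : Fin n} (hpq : p ≠ q)
    (h : segIdx I p = segIdx I q) : x p ≠ x q := by
  wlog hlt : p < q generalizing p q
  · exact (this hpq.symm h.symm (hpq.symm.lt_of_le (not_lt.1 hlt))).symm
  have := hx _ (ee_sub_ee_mem_PhiI hlt h)
  rwa [inn_ee_sub_ee, sub_ne_zero] at this

theorem RegI.congr_last (hstd : StandardI n ct I) (hx : RegI n ct I x)
    (hlast : ∀ k, ¬ BeforeLast I k → y k = x k)
    (hne : ∀ p q, p ≠ q → segIdx I p = segIdx I q → BeforeLast I p → y p ≠ y q) :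
    RegI n ct I y := by
  intro β hβ
  by_cases hsupp : ∀ k, BeforeLast I k → β k = 0
  · have : inn y β = inn x β := Finset.sum_congr rfl fun k _ => by
      by_cases hk : BeforeLast I k
      · simp [hsupp k hk]
      · rw [hlast k hk]
    exact this ▸ hx β hβ
  · obtain ⟨p, q, hpq, hseg, rfl⟩ := (eq_ee_sub_ee_or_of_mem_PhiI hstd hβ).resolve_right hsupp
    have hp : BeforeLast I p := by
      by_contra hp
      refine hsupp fun k hk => ?_
      have hkp : k ≠ p := fun h => hp (h ▸ hk)
      have hkq : k ≠ q := fun h => hp ((beforeLast_congr hseg).2 (h ▸ hk))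
      simp [ee_apply, hkp, hkq]
    rw [inn_ee_sub_ee]
    exact sub_ne_zero.2 (hne p q hpq hseg hp)

theorem RegI.comp_swap (hstd : StandardI n ct I) (hx : RegI n ct I x) {u v : Fin n}
    (hu : BeforeLast I u) (hv : BeforeLast I v)
    (huv : ∀ p, p ≠ v → segIdx I p = segIdx I u → x p ≠ x v)
    (hvu : ∀ p, p ≠ u → segIdx I p = segIdx I v → x p ≠ x u) :
    RegI n ct I (x ∘ Equiv.swap u v) := by
  refine hx.congr_last hstd (fun k hk => ?_) fun p q hpq hseg _ => ?_
  · have hku : k ≠ u := fun h => hk (h ▸ hu)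
    have hkv : k ≠ v := fun h => hk (h ▸ hv)
    rw [Function.comp_apply, Equiv.swap_apply_of_ne_of_ne hku hkv]
  · have := hx.apply_ne hpq hseg
    simp only [Function.comp_apply, Equiv.swap_apply_def]
    grind

theorem RegI.comp_swap_of_segIdx_eq (hstd : StandardI n ct I) (hx : RegI n ct I x) {u v : Fin n}
    (hu : BeforeLast I u) (huv : segIdx I u = segIdx I v) :
    RegI n ct I (x ∘ Equiv.swap u v) :=
  hx.comp_swap hstd hu ((beforeLast_congr huv).1 hu)
    (fun _ hp hseg => hx.apply_ne hp (hseg.trans huv))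
    (fun _ hp hseg => hx.apply_ne hp (hseg.trans huv.symm))

end Regularity

section LinkedRoots

variable {n : ℕ} {ct : CType} {I : Finset (Fin n)} {x y z β : V n} {p q : Fin n}

theorem not_beforeLast_of_inSeg_mval (hstd : StandardI n ct I)
    (hp : InSeg n ct I (mval n I) p) : ¬ BeforeLast I p := by
  rw [beforeLast_iff, (inSeg_iff hstd).1 hp]
  exact lt_irrefl _

theorem beforeLast_of_inSeg (hstd : StandardI n ct I) {s : ℕ} (hs : s < mval n I)
    (hp : InSeg n ct I s p) : BeforeLast I p :=
  beforeLast_iff.2 (((inSeg_iff hstd).1 hp).trans_lt hs)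

theorem ee_add_ee_apply_right_ne_zero (p q : Fin n) : (ee p + ee q) q ≠ (0 : ℝ) := by
  simp only [Pi.add_apply, ee_apply]
  split_ifs <;> norm_num

theorem ee_sub_ee_apply_right_ne_zero (hp : BeforeLast I p) (hq : ¬ BeforeLast I q) :
    (ee p - ee q) q ≠ (0 : ℝ) := by
  have hqp : q ≠ p := fun h => hq (h ▸ hp)
  simp [ee_apply, hqp]

theorem ExcBC.eq_shortR_or (hstd : StandardI n ct I) {shortR : Fin n → V n}
    (h : ExcBC n ct I shortR x β) :
    (∃ i, β = shortR i) ∨ ∃ k, β k ≠ 0 ∧ (¬ BeforeLast I k ∨ x k = 0) := by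
  obtain ⟨s, -, hs, a, -, -, -, ⟨i, j, -, -, -, hj, rfl | rfl⟩ | ⟨i, j, -, hj, -, rfl | rfl⟩ |
    ⟨i, j, hi, hj, -, rfl | rfl⟩⟩ := h
  · exact Or.inl ⟨i, rfl⟩
  · exact Or.inr ⟨j, ee_add_ee_apply_right_ne_zero i j, Or.inr hj⟩
  · exact Or.inl ⟨i, rfl⟩
  · exact Or.inr ⟨j, ee_add_ee_apply_right_ne_zero i j,
      Or.inl (not_beforeLast_of_inSeg_mval hstd hj)⟩
  · exact Or.inl ⟨i, rfl⟩
  · have hlast := not_beforeLast_of_inSeg_mval hstd hj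
    exact Or.inr ⟨j, ee_sub_ee_apply_right_ne_zero (beforeLast_of_inSeg hstd hs hi) hlast,
      Or.inl hlast⟩

theorem ExcD.exists_ne_zero (hstd : StandardI n CType.D I) (h : ExcD n I x β) :
    ∃ k, β k ≠ 0 ∧ (¬ BeforeLast I k ∨ x k = 0) := by
  obtain ⟨s, -, hs, a, -, -, -, -, -, i, j, k, l, hi, -, hk, -, hj, -,
    ⟨-, rfl | rfl⟩ | ⟨-, rfl | rfl⟩⟩ := h
  · exact ⟨j, ee_add_ee_apply_right_ne_zero i j, Or.inr hj⟩
  · exact ⟨k, ee_add_ee_apply_right_ne_zero i k, Or.inl (not_beforeLast_of_inSeg_mval hstd hk)⟩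
  · exact ⟨j, ee_add_ee_apply_right_ne_zero i j, Or.inr hj⟩
  · have hlast := not_beforeLast_of_inSeg_mval hstd hk
    exact ⟨k, ee_sub_ee_apply_right_ne_zero (beforeLast_of_inSeg hstd hs hi) hlast, Or.inl hlast⟩

theorem Exc.eq_smul_ee_or (hstd : StandardI n ct I) (h : Exc n ct I x β) :
    (∃ (c : ℝ) (i : Fin n), β = c • ee i) ∨ ∃ k, β k ≠ 0 ∧ (¬ BeforeLast I k ∨ x k = 0) := by
  cases ct with
  | B => exact (ExcBC.eq_shortR_or hstd h).imp_left fun ⟨i, hi⟩ => ⟨1, i, by rw [hi, one_smul]⟩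
  | C => exact (ExcBC.eq_shortR_or hstd h).imp_left fun ⟨i, hi⟩ => ⟨2, i, hi⟩
  | D => exact Or.inr (ExcD.exists_ne_zero hstd h)

theorem Conn.refl (hx : RegI n ct I x) : Conn n ct I x x := ⟨hx, hx, .refl⟩

theorem Conn.trans (hxy : Conn n ct I x y) (hyz : Conn n ct I y z) : Conn n ct I x z :=
  ⟨hxy.1, hyz.2.1, hxy.2.2.trans hyz.2.2⟩

theorem conn_sRefl (hstd : StandardI n ct I) (hpq : p < q) (hp : BeforeLast I p)
    (hq : BeforeLast I q) (hxp : x p ≠ 0) (hxq : x q ≠ 0)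
    (hβ : β = ee p - ee q ∨ β = ee p + ee q) (hβI : β ∉ PhiI n ct I) (hx : RegI n ct I x)
    (hy : RegI n ct I (sRefl β x)) : Conn n ct I x (sRefl β x) := by
  by_cases hfix : sRefl β x = x
  · exact hfix.symm ▸ Conn.refl hx
  have hβp : β p = 1 := by
    rcases hβ with rfl | rfl <;> simp [ee_apply, hpq.ne]
  have hβq : β q ≠ 0 := by
    rcases hβ with rfl | rfl <;> simp [ee_apply, hpq.ne']
  have hβ0 (k : Fin n) (hkp : k ≠ p) (hkq : k ≠ q) : β k = 0 := by
    rcases hβ with rfl | rfl <;> simp [ee_apply, hkp, hkq]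
  have hβΦ : β ∈ Phi n ct := DRoots_subset_Phi n ct ⟨p, q, hpq.ne, by tauto⟩
  have hpos : β ∈ PhiPos n ct :=
    ⟨hβΦ, p, hβp ▸ one_pos, fun k hk => hβ0 k hk.ne (hk.trans hpq).ne⟩
  have hexc : ¬ Exc n ct I x β := fun h => by
    rcases h.eq_smul_ee_or hstd with ⟨c, i, rfl⟩ | ⟨k, hk, hbad⟩
    · have hpi : p = i := by_contra fun h => by simp [ee_apply, h] at hβp
      have hqi : q = i := by_contra fun h => by simp [ee_apply, h] at hβq
      exact hpq.ne (hpi.trans hqi.symm)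
    · have : k = p ∨ k = q := by_contra fun h => hk (hβ0 k (by tauto) (by tauto))
      rcases this with rfl | rfl <;> tauto
  have hlinked : LinkedRoot n ct I x β := by
    rw [LinkedRoot, if_pos hstd]
    exact ⟨hx, hpos, hβI, hy, hfix, hexc⟩
  exact ⟨hx, hy, .single ⟨hx, hy, Or.inr ⟨β, hlinked, .refl⟩⟩⟩

theorem conn_negPair_comp_swap (hstd : StandardI n ct I) (hpq : p ≠ q) (hp : BeforeLast I p)
    (hq : BeforeLast I q) (hxp : x p ≠ 0) (hxq : x q ≠ 0) (hx : RegI n ct I x)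
    (hy : RegI n ct I (negPair p q x ∘ Equiv.swap p q)) :
    Conn n ct I x (negPair p q x ∘ Equiv.swap p q) := by
  wlog hlt : p < q generalizing p q
  · rw [negPair_comm, Equiv.swap_comm] at hy ⊢
    exact this hpq.symm hq hp hxq hxp hy (hpq.symm.lt_of_le (not_lt.1 hlt))
  have hβI : ee p + ee q ∉ PhiI n ct I := fun h => by
    obtain ⟨k, hk, hpk⟩ := hp
    have := sum_Iic_eq_zero_of_mem_PhiI hstd h hk
    simp only [Pi.add_apply, Finset.sum_add_distrib, sum_Iic_ee, hpk, if_true] at this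
    split_ifs at this <;> norm_num at this
  rw [← sRefl_ee_add_ee hpq] at hy ⊢
  exact conn_sRefl hstd hlt hp hq hxp hxq (Or.inr rfl) hβI hx hy

theorem WIOrb_comp_swap (hpq : p ≤ q) (h : segIdx I p = segIdx I q) :
    ∀ x, WIOrb n ct I x (x ∘ Equiv.swap p q) := by
  refine segment_induction (P := fun q => ∀ x, WIOrb n ct I x (x ∘ Equiv.swap p q)) h hpq ?_ ?_
  · intro x
    rw [Equiv.swap_self]
    exact Relation.ReflTransGen.refl
  · intro k hkI hpk hk ih x
    set k' : Fin n := ⟨k.1 + 1, hk⟩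
    have hkk' : k < k' := Nat.lt_succ_self k.1
    have hadj (y : V n) : WIOrb n ct I y (y ∘ Equiv.swap k k') := by
      refine .single ⟨k, hkI, ?_⟩
      rw [alphaR_of_lt ct k hk, sRefl_ee_sub_ee hkk'.ne]
    rcases hpk.eq_or_lt with rfl | hlt
    · exact hadj x
    have hswap : Equiv.swap p k' = Equiv.swap k k' * Equiv.swap p k * Equiv.swap k k' := by
      rw [Equiv.swap_mul_swap_mul_swap hlt.ne (hlt.trans hkk').ne, Equiv.swap_comm]
    rw [hswap]
    exact ((hadj x).trans (ih _)).trans (hadj _)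

theorem conn_comp_swap_of_segIdx_eq (hstd : StandardI n ct I) (hp : BeforeLast I p)
    (h : segIdx I p = segIdx I q) (hx : RegI n ct I x) :
    Conn n ct I x (x ∘ Equiv.swap p q) := by
  wlog hpq : p ≤ q generalizing p q
  · rw [Equiv.swap_comm]
    exact this ((beforeLast_congr h).1 hp) h.symm (le_of_not_ge hpq)
  have hy := hx.comp_swap_of_segIdx_eq hstd hp h
  exact ⟨hx, hy, .single ⟨hx, hy, Or.inl (WIOrb_comp_swap hpq h x)⟩⟩

theorem conn_of_comp_swap_of_segIdx_eq (hstd : StandardI n ct I) (hp : BeforeLast I p)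
    (h : segIdx I p = segIdx I q) (hx : RegI n ct I x) :
    Conn n ct I (x ∘ Equiv.swap p q) x := by
  have := conn_comp_swap_of_segIdx_eq hstd hp h (hx.comp_swap_of_segIdx_eq hstd hp h)
  rwa [Function.comp_assoc, ← Equiv.coe_trans, Equiv.swap_swap] at this

theorem conn_comp_swap_of_ne_zero (hstd : StandardI n ct I) (hp : BeforeLast I p)
    (hq : BeforeLast I q) (hxp : x p ≠ 0) (hxq : x q ≠ 0) (hx : RegI n ct I x)
    (hy : RegI n ct I (x ∘ Equiv.swap p q)) : Conn n ct I x (x ∘ Equiv.swap p q) := by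
  by_cases hseg : segIdx I p = segIdx I q
  · exact conn_comp_swap_of_segIdx_eq hstd hp hseg hx
  have hpq : p ≠ q := fun h => hseg (h ▸ rfl)
  wlog hlt : p < q generalizing p q
  · rw [Equiv.swap_comm] at hy ⊢
    exact this hq hp hxq hxp hy (Ne.symm hseg) hpq.symm (hpq.symm.lt_of_le (not_lt.1 hlt))
  have hβI : ee p - ee q ∉ PhiI n ct I := fun h => by
    refine hseg (segIdx_eq_iff.2 fun k hk => ?_)
    have := sum_Iic_eq_zero_of_mem_PhiI hstd h hk
    simp only [Pi.sub_apply, Finset.sum_sub_distrib, sum_Iic_ee] at this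
    grind
  rw [← sRefl_ee_sub_ee hpq] at hy ⊢
  exact conn_sRefl hstd hlt hp hq hxp hxq (Or.inl rfl) hβI hx hy

end LinkedRoots

section SignChanges

variable {n : ℕ} {ct : CType} {I : Finset (Fin n)} {x : V n} {i j k l : Fin n}

/-- The entry of `x` at `i` is nonzero, lies outside the last segment, and no other entry of its
segment has the same absolute value. For `i` in the segment `s < m` this says `|x_i| ≠ 0` and
`n_s^x(|x_i|) = 1`. -/
structure Isolated (I : Finset (Fin n)) (x : V n) (i : Fin n) : Prop where
  beforeLast : BeforeLast I i
  ne_zero : x i ≠ 0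
  eq_of_abs_eq : ∀ k, segIdx I k = segIdx I i → |x k| = |x i| → k = i

theorem Isolated.negPair (h : Isolated I x k) (i j : Fin n) : Isolated I (negPair i j x) k where
  beforeLast := h.beforeLast
  ne_zero := by
    rw [← abs_ne_zero, abs_negPair, abs_ne_zero]
    exact h.ne_zero
  eq_of_abs_eq r hr habs := h.eq_of_abs_eq r hr (by simpa only [abs_negPair] using habs)

theorem Isolated.apply_ne_neg (h : Isolated I x i) (hk : segIdx I k = segIdx I i) :
    x k ≠ -x i := fun hxk => by
  obtain rfl := h.eq_of_abs_eq k hk (by rw [hxk, abs_neg])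
  exact h.ne_zero (self_eq_neg.1 hxk)

theorem RegI.negPair (hstd : StandardI n ct I) (hx : RegI n ct I x) (hi : Isolated I x i)
    (hj : Isolated I x j) : RegI n ct I (negPair i j x) := by
  refine hx.congr_last hstd (fun k hk => ?_) fun p q hpq hseg _ heq => ?_
  · refine if_neg ?_
    rintro (rfl | rfl)
    exacts [hk hi.beforeLast, hk hj.beforeLast]
  have habs : |x p| = |x q| := by
    rw [← abs_negPair i j x p, ← abs_negPair i j x q, heq]
  have hp : ¬ (p = i ∨ p = j) := by
    rintro (rfl | rfl)
    exacts [hpq (hi.eq_of_abs_eq q hseg.symm habs.symm).symm,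
      hpq (hj.eq_of_abs_eq q hseg.symm habs.symm).symm]
  have hq : ¬ (q = i ∨ q = j) := by
    rintro (rfl | rfl)
    exacts [hpq (hi.eq_of_abs_eq p hseg habs), hpq (hj.eq_of_abs_eq p hseg habs)]
  refine hx.apply_ne hpq hseg ?_
  simpa only [JantzenBlocks.negPair, if_neg hp, if_neg hq] using heq

theorem conn_negPair_of_segIdx_eq (hstd : StandardI n ct I) (hij : i ≠ j) (hx : RegI n ct I x)
    (hi : Isolated I x i) (hj : Isolated I x j) (hseg : segIdx I i = segIdx I j) :
    Conn n ct I x (negPair i j x) := by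
  have hneg := hx.negPair hstd hi hj
  have hswap := hneg.comp_swap_of_segIdx_eq hstd hi.beforeLast hseg
  exact (conn_negPair_comp_swap hstd hij hi.beforeLast hj.beforeLast hi.ne_zero hj.ne_zero hx
    hswap).trans (conn_of_comp_swap_of_segIdx_eq hstd hi.beforeLast hseg hneg)

theorem conn_negPair_of_abs_eq (hstd : StandardI n ct I) (hij : i ≠ j) (hx : RegI n ct I x)
    (hi : Isolated I x i) (hj : Isolated I x j) (habs : |x i| = |x j|) :
    Conn n ct I x (negPair i j x) := by
  have hneg := hx.negPair hstd hi hj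
  rcases abs_eq_abs.1 habs with h | h
  · have hfix : negPair i j x ∘ Equiv.swap i j = negPair i j x := by
      funext r
      simp only [negPair, Function.comp_apply, Equiv.swap_apply_def]
      grind
    rw [← hfix] at hneg ⊢
    exact conn_negPair_comp_swap hstd hij hi.beforeLast hj.beforeLast hi.ne_zero hj.ne_zero hx hneg
  · have hswap : x ∘ Equiv.swap i j = negPair i j x := by
      funext r
      simp only [negPair, Function.comp_apply, Equiv.swap_apply_def]
      grind
    rw [← hswap] at hneg ⊢
    exact conn_comp_swap_of_ne_zero hstd hi.beforeLast hj.beforeLast hi.ne_zero hj.ne_zero hx hneg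

theorem conn_negPair_of_isolated_copy (hstd : StandardI n ct I) (hij : i ≠ j)
    (hx : RegI n ct I x) (hi : Isolated I x i) (hj : Isolated I x j) (hk : Isolated I x k)
    (hkj : segIdx I k = segIdx I j) (habs : |x k| = |x i|) : Conn n ct I x (negPair i j x) := by
  rcases eq_or_ne k i with rfl | hki
  · exact conn_negPair_of_segIdx_eq hstd hij hx hi hj hkj
  rcases eq_or_ne k j with rfl | hkj'
  · exact conn_negPair_of_abs_eq hstd hij hx hi hj habs.symm
  have hsplit : negPair k j (negPair i k x) = negPair i j x := by
    funext r
    simp only [negPair]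
    grind
  have hik := conn_negPair_of_abs_eq hstd hki.symm hx hi hk habs.symm
  rw [← hsplit]
  exact hik.trans
    (conn_negPair_of_segIdx_eq hstd hkj' hik.2.1 (hk.negPair i k) (hj.negPair i k) hkj)

theorem conn_negPair_of_absent (hstd : StandardI n ct I) (hij : i ≠ j) (hx : RegI n ct I x)
    (hi : Isolated I x i) (hj : Isolated I x j)
    (absent_i : ∀ p, segIdx I p = segIdx I i → |x p| ≠ |x j|)
    (absent_j : ∀ p, segIdx I p = segIdx I j → |x p| ≠ |x i|) : Conn n ct I x (negPair i j x) := by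
  have hswap : RegI n ct I (x ∘ Equiv.swap i j) :=
    hx.comp_swap hstd hi.beforeLast hj.beforeLast (fun p _ hp h => absent_i p hp (congrArg _ h))
      (fun p _ hp h => absent_j p hp (congrArg _ h))
  have hback : negPair i j (x ∘ Equiv.swap i j) ∘ Equiv.swap i j = negPair i j x := by
    funext r
    simp only [negPair, Function.comp_apply, Equiv.swap_apply_def]
    grind
  have hneg := hx.negPair hstd hi hj
  refine (conn_comp_swap_of_ne_zero hstd hi.beforeLast hj.beforeLast hi.ne_zero hj.ne_zero hx
    hswap).trans ?_
  rw [← hback] at hneg ⊢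
  refine conn_negPair_comp_swap hstd hij hi.beforeLast hj.beforeLast ?_ ?_ hswap hneg
  · simpa using hj.ne_zero
  · simpa using hi.ne_zero

theorem conn_comp_swap_of_opposite_copies (hstd : StandardI n ct I) (hx : RegI n ct I x)
    (hi : Isolated I x i) (hj : Isolated I x j) (hli : segIdx I l = segIdx I i)
    (hkj : segIdx I k = segIdx I j) (hxl : x l = -x j) (hxk : x k = -x i) :
    Conn n ct I x (x ∘ Equiv.swap l k) := by
  have hl := (beforeLast_congr hli).2 hi.beforeLast
  have hk := (beforeLast_congr hkj).2 hj.beforeLast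
  refine conn_comp_swap_of_ne_zero hstd hl hk (hxl ▸ neg_ne_zero.2 hj.ne_zero)
    (hxk ▸ neg_ne_zero.2 hi.ne_zero) hx (hx.comp_swap hstd hl hk ?_ ?_)
  · exact fun p _ hp => hxk ▸ hi.apply_ne_neg (hp.trans hli)
  · exact fun p _ hp => hxl ▸ hj.apply_ne_neg (hp.trans hkj)

theorem conn_negPair_of_opposite_copies (hstd : StandardI n ct I) (hx : RegI n ct I x)
    (hi : Isolated I x i) (hj : Isolated I x j) (hli : segIdx I l = segIdx I i)
    (hkj : segIdx I k = segIdx I j) (hxl : x l = -x j) (hxk : x k = -x i) :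
    Conn n ct I x (negPair i j x) := by
  have hseg : segIdx I i ≠ segIdx I j := fun h => hj.apply_ne_neg (hli.trans h) hxl
  have hij : i ≠ j := fun h => hseg (congrArg _ h)
  by_cases habs : |x i| = |x j|
  · exact conn_negPair_of_abs_eq hstd hij hx hi hj habs
  have hl : l ≠ i := fun h => habs (by rw [← h, hxl, abs_neg])
  have hk : k ≠ j := fun h => habs (by rw [← h, hxk, abs_neg])
  have hlj : l ≠ j := fun h => hseg (h ▸ hli.symm)
  have hki : k ≠ i := fun h => hseg (h ▸ hkj)
  have hcross := conn_comp_swap_of_opposite_copies hstd hx hi hj hli hkj hxl hxk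
  have hneg := hx.negPair hstd hi hj
  have hjk := hneg.comp_swap_of_segIdx_eq hstd hj.beforeLast hkj.symm
  have hil := hjk.comp_swap_of_segIdx_eq hstd hi.beforeLast hli.symm
  have hreflect : negPair i j (x ∘ Equiv.swap l k) ∘ Equiv.swap i j =
      (negPair i j x ∘ Equiv.swap j k) ∘ Equiv.swap i l := by
    funext r
    simp only [negPair, Function.comp_apply, Equiv.swap_apply_def]
    grind
  refine hcross.trans (.trans ?_ <|
    (conn_of_comp_swap_of_segIdx_eq hstd hi.beforeLast hli.symm hjk).trans
      (conn_of_comp_swap_of_segIdx_eq hstd hj.beforeLast hkj.symm hneg))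
  rw [← hreflect] at hil ⊢
  refine conn_negPair_comp_swap hstd hij hi.beforeLast hj.beforeLast ?_ ?_ hcross.2.1 hil
  · rw [Function.comp_apply, Equiv.swap_apply_of_ne_of_ne hl.symm hki.symm]
    exact hi.ne_zero
  · rw [Function.comp_apply, Equiv.swap_apply_of_ne_of_ne hlj.symm hk.symm]
    exact hj.ne_zero

end SignChanges

section Counting

variable {n : ℕ} {ct : CType} {I : Finset (Fin n)} {x : V n} {i j : Fin n} {s t : ℕ}

theorem isolated_of_nsl_eq_one (hstd : StandardI n ct I) (hs : s < mval n I)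
    (hi : InSeg n ct I s i) (hxi : x i ≠ 0) {a : ℝ} (ha : |x i| = a)
    (h : nsl n ct I x s a = 1) : Isolated I x i where
  beforeLast := beforeLast_of_inSeg hstd hs hi
  ne_zero := hxi
  eq_of_abs_eq k hk hka := by
    have hks : InSeg n ct I s k := (inSeg_iff hstd).2 (hk ▸ (inSeg_iff hstd).1 hi)
    exact Finset.card_le_one.1 h.le k (by simp [hks, hka, ha]) i (by simp [hi, ha])

theorem exists_inSeg_of_nsl_pos {a : ℝ} (h : 0 < nsl n ct I x s a) :
    ∃ k, InSeg n ct I s k ∧ |x k| = a := by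
  obtain ⟨k, hk⟩ := Finset.card_pos.1 h
  exact ⟨k, (Finset.mem_filter.1 hk).2⟩

theorem exists_inSeg_eq_neg_of_one_lt_nsl (hstd : StandardI n ct I) (hx : RegI n ct I x) {c : ℝ}
    (h : 1 < nsl n ct I x s |c|) : ∃ k, InSeg n ct I s k ∧ x k = -c := by
  obtain ⟨p, hp, q, hq, hpq⟩ := Finset.one_lt_card.1 h
  obtain ⟨hps, hpc⟩ := (Finset.mem_filter.1 hp).2
  obtain ⟨hqs, hqc⟩ := (Finset.mem_filter.1 hq).2
  have hseg : segIdx I p = segIdx I q :=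
    segIdx_eq_of_inSeg hstd hps hqs
  rcases abs_eq_abs.1 hpc with hpc | hpc
  · rcases abs_eq_abs.1 hqc with hqc | hqc
    · exact absurd (hpc.trans hqc.symm) (hx.apply_ne hpq hseg)
    · exact ⟨q, hqs, hqc⟩
  · exact ⟨p, hps, hpc⟩

theorem abs_ne_of_nsl_eq_zero (hstd : StandardI n ct I) {a : ℝ} (hi : InSeg n ct I s i)
    (h : nsl n ct I x s a = 0) (p : Fin n) (hp : segIdx I p = segIdx I i) : |x p| ≠ a := by
  have hps : InSeg n ct I s p := (inSeg_iff hstd).2 (hp ▸ (inSeg_iff hstd).1 hi)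
  exact fun ha => Finset.filter_eq_empty_iff.1 (Finset.card_eq_zero.1 h) (Finset.mem_univ p)
    ⟨hps, ha⟩

theorem conn_negPair_of_nsl_eq_one (hstd : StandardI n ct I) (hij : i ≠ j) (hx : RegI n ct I x)
    (hi : Isolated I x i) (hj : Isolated I x j) (ht : t < mval n I) (hjt : InSeg n ct I t j)
    (h : nsl n ct I x t |x i| = 1) : Conn n ct I x (negPair i j x) := by
  obtain ⟨k, hkt, habs⟩ := exists_inSeg_of_nsl_pos (h ▸ one_pos)
  have hxk : x k ≠ 0 := abs_ne_zero.1 (habs ▸ abs_ne_zero.2 hi.ne_zero)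
  have hkj : segIdx I k = segIdx I j :=
    segIdx_eq_of_inSeg hstd hkt hjt
  exact conn_negPair_of_isolated_copy hstd hij hx hi hj
    (isolated_of_nsl_eq_one hstd ht hkt hxk habs h) hkj habs

theorem statement1_general (hstd : StandardI n ct I) (hx : RegI n ct I x) (hxi : x i ≠ 0)
    (hxj : x j ≠ 0) (hs : s < mval n I) (ht : t < mval n I) (his : InSeg n ct I s i)
    (hjt : InSeg n ct I t j) (hi : nsl n ct I x s |x i| = 1) (hj : nsl n ct I x t |x j| = 1)
    (h2 : nsl n ct I x s |x j| ≤ 1 ∨ 1 ≤ nsl n ct I x t |x i|)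
    (h3 : 1 ≤ nsl n ct I x s |x j| ∨ nsl n ct I x t |x i| ≤ 1) :
    Conn n ct I x (sRefl (ee i) (sRefl (ee j) x)) := by
  rcases eq_or_ne i j with rfl | hij
  · exact (sRefl_ee_sRefl_ee_self i x).symm ▸ Conn.refl hx
  rw [sRefl_ee_sRefl_ee hij]
  have isolated_i := isolated_of_nsl_eq_one hstd hs his hxi rfl hi
  have isolated_j := isolated_of_nsl_eq_one hstd ht hjt hxj rfl hj
  by_cases one_t : nsl n ct I x t |x i| = 1
  · exact conn_negPair_of_nsl_eq_one hstd hij hx isolated_i isolated_j ht hjt one_t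
  by_cases one_s : nsl n ct I x s |x j| = 1
  · rw [negPair_comm]
    exact conn_negPair_of_nsl_eq_one hstd hij.symm hx isolated_j isolated_i hs his one_s
  have hdichotomy : (nsl n ct I x s |x j| = 0 ∧ nsl n ct I x t |x i| = 0) ∨
      (1 < nsl n ct I x s |x j| ∧ 1 < nsl n ct I x t |x i|) := by
    omega
  rcases hdichotomy with ⟨zero_s, zero_t⟩ | ⟨two_s, two_t⟩
  · exact conn_negPair_of_absent hstd hij hx isolated_i isolated_j
      (abs_ne_of_nsl_eq_zero hstd his zero_s) (abs_ne_of_nsl_eq_zero hstd hjt zero_t)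
  · obtain ⟨l, hls, hxl⟩ := exists_inSeg_eq_neg_of_one_lt_nsl hstd hx two_s
    obtain ⟨k, hkt, hxk⟩ := exists_inSeg_eq_neg_of_one_lt_nsl hstd hx two_t
    exact conn_negPair_of_opposite_copies hstd hx isolated_i isolated_j
      (segIdx_eq_of_inSeg hstd hls his) (segIdx_eq_of_inSeg hstd hkt hjt) hxl hxk

end Counting

/-- Lemma 4.10 / `cclem3`. -/
theorem statement1 (n : ℕ) (ct : CType) (I J : Finset (Fin n)) (lam lbar : V n)
    (hstd : StandardI n ct I)
    (hint : IntegralW n ct lam) (hreg : RegI n ct I lam)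
    (horb : WOrb n ct lam lbar) (hdom : DominantW n ct lbar)
    (hJ : ∀ i : Fin n, i ∈ J ↔ inn lbar (alphaR n ct i) = 0)
    (i j : Fin n) (a b : ℝ) (ha : a = |lam i|) (hb : b = |lam j|)
    (hab : a * b ≠ 0)
    (hiq : i.1 + 1 ≤ qv n ct I (mval n I - 1))
    (hjq : j.1 + 1 ≤ qv n ct I (mval n I - 1))
    (s t : ℕ) (hs1 : 1 ≤ s) (hsm : s < mval n I) (ht1 : 1 ≤ t) (htm : t < mval n I)
    (hsegi : InSeg n ct I s i) (hsegj : InSeg n ct I t j)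
    (h1 : nsl n ct I lam s a = 1 ∧ nsl n ct I lam t b = 1)
    (h2 : nsl n ct I lam s b ≤ 1 ∨ 1 ≤ nsl n ct I lam t a)
    (h3 : 1 ≤ nsl n ct I lam s b ∨ nsl n ct I lam t a ≤ 1) :
    Conn n ct I lam (sRefl (ee i) (sRefl (ee j) lam)) := by
  subst ha hb
  exact statement1_general hstd hreg (abs_ne_zero.1 (left_ne_zero_of_mul hab))
    (abs_ne_zero.1 (right_ne_zero_of_mul hab)) hsm htm hsegi hsegj h1.1 h1.2 h2 h3

end JantzenBlocks
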